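/- arXiv:1802.03534 — 2 statements merged into one kernel-verified Lean document; each statement's English description precedes it below -/
import Mathlib

section
/- Let q = 2^s with s ≥ 2, r = q⁴, and N = q²−1, so that n = (r−1)/N = q²+1. Then the irreducible cyclic code C(r,N) over GF(q) is a linear code with parameters [q²+1, 4, q²−q]; in particular the GF(q)-linear map β ↦ c(β) = (Tr_{r/q}(β), Tr_{r/q}(βθ), …, Tr_{r/q}(βθ^{n−1})) from GF(r) to GF(q)^{q²+1} is injective, so the code has q⁴ codewords, and the minimum Hamming weight of a nonzero codeword is q²−q. -/
/-!
Write `q = |F|` and `σ x = x ^ q²`, the involution of `E` over `F`. The coordinates of the code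
run through the group `U = {u | u * σ u = 1}` of order `q² + 1`, so the zeros of `c(β)` are the
`u ∈ U` with `Tr (β u) = 0`. In characteristic two `Tr x = (x + σ x) + (x + σ x) ^ q`, hence
`Tr x = 0` exactly when `x + σ x ∈ F`. Writing `β = a v` with `σ a = a` and `v ∈ U`, the zeros
correspond to the `w = v u ∈ U` with `a (w + w⁻¹) ∈ F`. For `w ≠ 1` put `y = w / (w + 1)`: then
`y² + y = (w + w⁻¹)⁻¹ ∈ a F` and `y + σ y = 1`. The solutions of the first condition form an
additive group of order at most `2 q`, of which the second cuts out a proper coset, so there are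
at most `q` such `y` and `c(β)` has at most `q + 1` zeros. That the distance `q² - q` is attained
follows by averaging the weight over all codewords (Plotkin's bound).
-/

section AddGroup

variable {G H : Type*} [AddGroup G] [AddGroup H]

theorem ncard_preimage_singleton_le_card_ker [Finite G] (f : G →+ H) (b : H) :
    (f ⁻¹' {b}).ncard ≤ Nat.card f.ker := by
  obtain hempty | ⟨x₀, hx₀⟩ := (f ⁻¹' {b}).eq_empty_or_nonempty
  · simp [hempty]
  · rw [← SetLike.coe_sort_coe, Nat.card_coe_set_eq]
    refine Set.ncard_le_ncard_of_injOn (· - x₀) (fun x hx => ?_) sub_left_injective.injOn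
    have hfx : f x = b := hx
    have hfx₀ : f x₀ = b := hx₀
    simp [AddMonoidHom.mem_ker, hfx, hfx₀]

theorem addOrderOf_mul_ncard_preimage_singleton_le [Finite G] (f : G →+ H) (b : H) :
    addOrderOf b * (f ⁻¹' {b}).ncard ≤ Nat.card G := by
  obtain hempty | ⟨x₀, hx₀⟩ := (f ⁻¹' {b}).eq_empty_or_nonempty
  · simp [hempty]
  have : Finite f.range := Set.finite_range f
  have horder : addOrderOf b ≤ Nat.card f.range :=
    Nat.le_of_dvd Nat.card_pos (f.range.addOrderOf_dvd_natCard ⟨x₀, hx₀⟩)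
  calc addOrderOf b * (f ⁻¹' {b}).ncard
      ≤ Nat.card f.range * Nat.card f.ker :=
        Nat.mul_le_mul horder (ncard_preimage_singleton_le_card_ker f b)
    _ = Nat.card G := by rw [← AddSubgroup.index_ker, AddSubgroup.index_mul_card]

theorem card_comap_le_card_ker_mul_card (f : G →+ H) (A : AddSubgroup H) [Finite A] :
    Nat.card (A.comap f) ≤ Nat.card f.ker * Nat.card A := by
  have hker : f.ker ≤ A.comap f := f.ker_le_comap A
  calc Nat.card (A.comap f)
      = Nat.card f.ker * Nat.card ((A.comap f).map f) := by
        rw [← AddSubgroup.relIndex_ker, ← AddSubgroup.relIndex_bot_left,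
          ← AddSubgroup.relIndex_bot_left, AddSubgroup.relIndex_mul_relIndex _ _ _ bot_le hker]
    _ ≤ Nat.card f.ker * Nat.card A :=
        Nat.mul_le_mul_left _ (AddSubgroup.card_le_of_le (A.map_comap_le f))

end AddGroup

section Plotkin

open Finset

variable {V A ι : Type*} [AddGroup V] [Fintype V] [AddGroup A] [Fintype A] [DecidableEq A]
  [Fintype ι]

theorem card_mul_card_filter_ne_zero_le (g : V →+ A) :
    Fintype.card A * #{v | g v ≠ 0} ≤ (Fintype.card A - 1) * Fintype.card V := by
  have hV : Fintype.card V ≤ Fintype.card A * #{v | g v = 0} := by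
    simpa [Fintype.card_subtype, mul_comm] using card_comap_le_card_ker_mul_card g ⊤
  have hsplit : #{v | g v = 0} + #{v | g v ≠ 0} = Fintype.card V :=
    card_filter_add_card_filter_not _
  rw [Nat.sub_one_mul, ← hsplit, mul_add, hsplit]
  omega

theorem card_mul_sum_hammingNorm_le (f : V →+ (ι → A)) :
    Fintype.card A * ∑ v, hammingNorm (f v) ≤
      Fintype.card ι * ((Fintype.card A - 1) * Fintype.card V) := by
  have hswap : ∑ v, hammingNorm (f v) = ∑ i, #{v | f v i ≠ 0} :=
    sum_card_bipartiteAbove_eq_sum_card_bipartiteBelow fun v i => f v i ≠ 0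
  rw [hswap, mul_sum, ← smul_eq_mul (Fintype.card ι)]
  exact sum_le_card_nsmul _ _ _ fun i _ =>
    card_mul_card_filter_ne_zero_le ((Pi.evalAddMonoidHom _ i).comp f)

theorem plotkin_bound (f : V →+ (ι → A)) {d : ℕ} (hd : ∀ v, v ≠ 0 → d ≤ hammingNorm (f v)) :
    Fintype.card A * ((Fintype.card V - 1) * d) ≤
      Fintype.card ι * ((Fintype.card A - 1) * Fintype.card V) := by
  classical
  refine le_trans (Nat.mul_le_mul_left _ ?_) (card_mul_sum_hammingNorm_le f)
  calc (Fintype.card V - 1) * d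
      = #(univ.erase (0 : V)) * d := by rw [card_erase_of_mem (mem_univ _), card_univ]
    _ ≤ ∑ v ∈ univ.erase 0, hammingNorm (f v) :=
        card_nsmul_le_sum _ _ _ fun v hv => hd v (ne_of_mem_erase hv)
    _ ≤ ∑ v, hammingNorm (f v) := sum_le_sum_of_subset (erase_subset _ _)

theorem exists_ne_zero_hammingNorm_le_sq_sub {q : ℕ} (hq : 1 < q) (hA : Fintype.card A = q)
    (hV : Fintype.card V = q ^ 4) (hι : Fintype.card ι = q ^ 2 + 1) (f : V →+ (ι → A)) :
    ∃ v, v ≠ 0 ∧ hammingNorm (f v) ≤ q ^ 2 - q := by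
  by_contra! hlarge
  have hbound := plotkin_bound f hlarge
  rw [hA, hV, hι] at hbound
  obtain ⟨m, rfl⟩ : ∃ m, q = m + 1 := ⟨q - 1, by omega⟩
  have hsq : (m + 1) ^ 2 - (m + 1) = m ^ 2 + m := by
    rw [Nat.sub_eq_iff_eq_add (by nlinarith)]; ring
  have hfour : (m + 1) ^ 4 - 1 = ((m + 1) ^ 2 + 1) * m * (m + 2) := by
    rw [Nat.sub_eq_iff_eq_add (Nat.one_le_pow _ _ (by omega))]; ring
  rw [hsq, hfour, Nat.add_sub_cancel] at hbound
  have hpos : 0 < (m + 1) * ((m + 1) ^ 2 + 1) * m := by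
    have : 0 < m := by omega
    positivity
  have hcancel : (m + 2) * (m ^ 2 + m + 1) ≤ (m + 1) ^ 3 :=
    Nat.le_of_mul_le_mul_left (by linarith) hpos
  linarith [hcancel]

end Plotkin

section ArtinSchreier

variable {E : Type*} [Field E]

/-- The Artin–Schreier map `y ↦ y ^ p - y` of a field of characteristic `p`, as an additive
homomorphism. -/
def artinSchreier (E : Type*) [Field E] (p : ℕ) [ExpChar E p] : E →+ E :=
  (frobenius E p : E →+ E) - AddMonoidHom.id E

theorem artinSchreier_apply (p : ℕ) [ExpChar E p] (y : E) : artinSchreier E p y = y ^ p - y :=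
  rfl

theorem card_ker_artinSchreier (p : ℕ) [Fact p.Prime] [CharP E p] :
    Nat.card (artinSchreier E p).ker = p := by
  have hker : (artinSchreier E p).ker = (⊥ : Subfield E).toAddSubgroup := by
    ext y
    rw [AddMonoidHom.mem_ker, artinSchreier_apply, sub_eq_zero]
    exact (Subfield.mem_bot_iff_pow_eq_self E p).symm
  rw [hker]
  exact Subfield.card_bot E p

theorem ncard_artinSchreier_mem_and_eq_le [Finite E] {H : Type*} [AddGroup H] (p : ℕ)
    [Fact p.Prime] [CharP E p] (A : AddSubgroup E) (φ : E →+ H) {b : H} (hb : addOrderOf b = p) :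
    {y | artinSchreier E p y ∈ A ∧ φ y = b}.ncard ≤ Nat.card A := by
  let K : AddSubgroup E := A.comap (artinSchreier E p)
  have himage : {y | artinSchreier E p y ∈ A ∧ φ y = b} =
      K.subtype '' ((φ.comp K.subtype) ⁻¹' {b}) := by
    ext y
    simp [K, and_comm]
  refine Nat.le_of_mul_le_mul_left (c := p) ?_ (Fact.out : p.Prime).pos
  calc p * {y | artinSchreier E p y ∈ A ∧ φ y = b}.ncard
      = addOrderOf b * ((φ.comp K.subtype) ⁻¹' {b}).ncard := by
        rw [himage, Set.ncard_image_of_injective _ K.subtype_injective, hb]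
    _ ≤ Nat.card K := addOrderOf_mul_ncard_preimage_singleton_le _ b
    _ ≤ p * Nat.card A := by
        simpa only [card_ker_artinSchreier] using
          card_comap_le_card_ker_mul_card (artinSchreier E p) A

end ArtinSchreier

section CharTwo

variable {E : Type*} [Field E] [CharP E 2]

theorem artinSchreier_div_add_one {w : E} (hw₀ : w ≠ 0) (hw₁ : w ≠ 1) :
    artinSchreier E 2 (w / (w + 1)) = (w + w⁻¹)⁻¹ := by
  have hw : w + 1 ≠ 0 := by rwa [Ne, CharTwo.add_eq_zero]
  have hadd_inv : w + w⁻¹ = (w + 1) ^ 2 / w := by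
    rw [CharTwo.add_sq]
    field_simp
  rw [artinSchreier_apply, hadd_inv, CharTwo.sub_eq_add]
  field_simp
  linear_combination w * CharTwo.two_eq_zero (R := E)

theorem map_div_add_one_add_self (σ : E →+* E) {w : E} (hσ : w * σ w = 1) (hw₁ : w ≠ 1) :
    σ (w / (w + 1)) + w / (w + 1) = 1 := by
  have hw₀ : w ≠ 0 := left_ne_zero_of_mul_eq_one hσ
  have hw : w + 1 ≠ 0 := by rwa [Ne, CharTwo.add_eq_zero]
  have hw' : 1 + w ≠ 0 := by rwa [add_comm]
  rw [map_div₀, map_add, map_one, eq_inv_of_mul_eq_one_right hσ]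
  field_simp
  ring

-- `w = 1` always belongs to the set, because `(1 + 1⁻¹)⁻¹ = 0⁻¹ = 0`; hence the `+ 1`.
theorem ncard_unitary_inv_add_inv_mem_le [Finite E] (σ : E →+* E) (A : AddSubgroup E) :
    {w | w * σ w = 1 ∧ (w + w⁻¹)⁻¹ ∈ A}.ncard ≤ Nat.card A + 1 := by
  let W : Set E := {w | w * σ w = 1 ∧ (w + w⁻¹)⁻¹ ∈ A}
  have hinj : Set.InjOn (fun w => w / (w + 1)) (W \ {1}) := by
    intro x ⟨_, hx⟩ y ⟨_, hy⟩ hxy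
    have hx : x + 1 ≠ 0 := by rwa [Ne, CharTwo.add_eq_zero]
    have hy : y + 1 ≠ 0 := by rwa [Ne, CharTwo.add_eq_zero]
    linear_combination (div_eq_div_iff hx hy).1 hxy
  have hmaps : ∀ w ∈ W \ {1}, w / (w + 1) ∈
      {y | artinSchreier E 2 y ∈ A ∧ (σ.toAddMonoidHom + AddMonoidHom.id E) y = 1} := by
    intro w ⟨⟨hσ, hA⟩, hw₁⟩
    refine ⟨?_, map_div_add_one_add_self σ hσ hw₁⟩
    rwa [artinSchreier_div_add_one (left_ne_zero_of_mul_eq_one hσ) hw₁]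
  have horder : addOrderOf (1 : E) = 2 := CharP.eq E (CharP.addOrderOf_one E) inferInstance
  calc W.ncard ≤ (W \ {1}).ncard + 1 :=
        Nat.sub_le_iff_le_add.1 (Set.pred_ncard_le_ncard_sdiff_singleton W 1)
    _ ≤ Nat.card A + 1 := by
        gcongr
        exact (Set.ncard_le_ncard_of_injOn _ hmaps hinj).trans
          (ncard_artinSchreier_mem_and_eq_le 2 A _ horder)

theorem exists_fixed_mul_unitary [Finite E] (σ : E →+* E) (hσ : ∀ x, σ (σ x) = x) {β : E}
    (hβ : β ≠ 0) : ∃ a v : E, a ≠ 0 ∧ σ a = a ∧ v * σ v = 1 ∧ β = a * v := by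
  obtain ⟨a, ha⟩ := FiniteField.isSquare_of_char_two (ringChar.eq E 2) (β * σ β)
  have ha₀ : a ≠ 0 := by
    rintro rfl
    simp [hβ] at ha
  have hσa : σ a = a := by
    have hsq : σ a ^ 2 = a ^ 2 := by rw [← map_pow, sq, ← ha, map_mul, hσ, mul_comm]
    exact frobenius_inj E 2 hsq
  refine ⟨a, β / a, ha₀, hσa, ?_, (mul_div_cancel₀ β ha₀).symm⟩
  rw [map_div₀, hσa, div_mul_div_comm, ha, div_self (mul_ne_zero ha₀ ha₀)]

end CharTwo

section Trace

theorem natCard_span_singleton (K : Type*) {V : Type*} [DivisionRing K] [AddCommGroup V]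
    [Module K V] {v : V} (hv : v ≠ 0) : Nat.card (Submodule.span K {v}) = Nat.card K :=
  Nat.card_congr (LinearEquiv.toSpanNonzeroSingleton K V v hv).symm.toEquiv

variable {F E : Type*} [Field F] [Fintype F] [Field E] [Finite E] [Algebra F E]

theorem mem_range_algebraMap_of_pow_card_eq {x : E} (hx : x ^ Fintype.card F = x) :
    x ∈ Set.range (algebraMap F E) := by
  refine (IsGalois.mem_range_algebraMap_iff_fixed x).2 fun τ => ?_
  obtain ⟨n, rfl⟩ := (FiniteField.bijective_frobeniusAlgEquivOfAlgebraic_pow F E).2 τ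
  rw [AlgEquiv.coe_pow]
  exact Function.IsFixedPt.iterate hx n

theorem add_pow_mem_range_algebraMap_of_trace_eq_zero [CharP E 2]
    (hdim : Module.finrank F E = 4) {x : E} (hx : Algebra.trace F E x = 0) :
    x + x ^ Fintype.card F ^ 2 ∈ Set.range (algebraMap F E) := by
  apply mem_range_algebraMap_of_pow_card_eq
  have hsum := FiniteField.algebraMap_trace_eq_sum_pow F E x
  rw [hx, map_zero, hdim, Nat.card_eq_fintype_card] at hsum
  simp only [Finset.sum_range_succ, Finset.range_zero, Finset.sum_empty, zero_add, pow_zero,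
    pow_one] at hsum
  have hfrob : (x + x ^ Fintype.card F ^ 2) ^ Fintype.card F =
      x ^ Fintype.card F + x ^ Fintype.card F ^ 3 := by
    rw [← FiniteField.frobeniusAlgHom_apply F E, map_add]
    simp only [FiniteField.frobeniusAlgHom_apply, ← pow_mul, ← pow_succ]
  rw [← CharTwo.add_eq_zero, hfrob, hsum]
  ring

theorem ncard_pow_eq_one_trace_mul_eq_zero_le [CharP E 2] (hdim : Module.finrank F E = 4)
    {β : E} (hβ : β ≠ 0) :
    {u : E | u ^ (Fintype.card F ^ 2 + 1) = 1 ∧ Algebra.trace F E (β * u) = 0}.ncard ≤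
      Fintype.card F + 1 := by
  let σ : E →+* E := (FiniteField.frobeniusAlgHom F E ^ 2).toRingHom
  have hσ (x : E) : σ x = x ^ Fintype.card F ^ 2 := by
    simp [σ, sq, pow_mul]
  have hσσ (x : E) : σ (σ x) = x := by
    have hpow : FiniteField.frobeniusAlgHom F E ^ 4 = 1 := by
      rw [← hdim, ← FiniteField.orderOf_frobeniusAlgHom, pow_orderOf_eq_one]
    exact DFunLike.congr_fun hpow x
  obtain ⟨a, v, ha₀, hσa, hv, rfl⟩ := exists_fixed_mul_unitary σ hσσ hβ
  let A : AddSubgroup E := (Submodule.span F {a}).toAddSubgroup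
  have hA : Nat.card A = Fintype.card F := by
    rw [← Nat.card_eq_fintype_card, ← natCard_span_singleton F ha₀]
    rfl
  have hmaps : ∀ u ∈ {u : E | u ^ (Fintype.card F ^ 2 + 1) = 1 ∧
      Algebra.trace F E (a * v * u) = 0},
      v * u ∈ {w | w * σ w = 1 ∧ (w + w⁻¹)⁻¹ ∈ A} := by
    rintro u ⟨hu, htrace⟩
    have hw : v * u * σ (v * u) = 1 := by
      rw [map_mul, mul_mul_mul_comm, hv, hσ u, ← pow_succ', hu, one_mul]
    obtain ⟨c, hc⟩ := add_pow_mem_range_algebraMap_of_trace_eq_zero hdim htrace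
    refine ⟨hw, Submodule.mem_span_singleton.2 ⟨c⁻¹, ?_⟩⟩
    rw [← hσ, mul_assoc, map_mul, hσa, eq_inv_of_mul_eq_one_right hw, ← mul_add] at hc
    rw [Algebra.smul_def, map_inv₀, hc, mul_inv_rev, inv_mul_cancel_right₀ ha₀]
  calc _ ≤ {w | w * σ w = 1 ∧ (w + w⁻¹)⁻¹ ∈ A}.ncard :=
        Set.ncard_le_ncard_of_injOn _ hmaps
          (mul_right_injective₀ (left_ne_zero_of_mul_eq_one hv)).injOn
    _ ≤ Fintype.card F + 1 := hA ▸ ncard_unitary_inv_add_inv_mem_le σ A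

end Trace

section Code

variable {F E : Type*} [Field F] [Field E] [Algebra F E]

/-- The encoder `β ↦ (Tr (β * θ ^ j))_{j < n}` of the trace code of length `n` attached to `θ`;
its range is the irreducible cyclic code `C(r, N)` when `θ` is the `N`-th power of a primitive
element and `n = (r - 1) / N`. -/
noncomputable def traceEncoder (F : Type*) {E : Type*} [Field F] [Field E] [Algebra F E] (θ : E)
    (n : ℕ) : E →ₗ[F] (Fin n → F) :=
  LinearMap.pi fun j => (Algebra.trace F E).comp (LinearMap.mulRight F (θ ^ (j : ℕ)))

theorem traceEncoder_apply (θ : E) (n : ℕ) (β : E) (j : Fin n) :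
    traceEncoder F θ n β j = Algebra.trace F E (β * θ ^ (j : ℕ)) :=
  rfl

theorem card_filter_traceEncoder_eq_zero_le [Finite E] [DecidableEq F] {θ : E} {n : ℕ}
    (hθ : IsPrimitiveRoot θ n) (β : E) :
    (Finset.univ.filter fun j => traceEncoder F θ n β j = 0).card ≤
      {u : E | u ^ n = 1 ∧ Algebra.trace F E (β * u) = 0}.ncard := by
  rw [← Set.ncard_coe_finset]
  refine Set.ncard_le_ncard_of_injOn (fun j => θ ^ (j : ℕ)) (fun j hj => ⟨?_, ?_⟩)
    fun i _ j _ hij => Fin.ext (hθ.pow_inj i.2 j.2 hij)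
  · rw [pow_right_comm, hθ.pow_eq_one, one_pow]
  · exact (Finset.mem_filter.1 hj).2

theorem sq_sub_le_hammingNorm_traceEncoder [Fintype F] [Finite E] [DecidableEq F] [CharP E 2]
    (hdim : Module.finrank F E = 4) {θ : E} (hθ : IsPrimitiveRoot θ (Fintype.card F ^ 2 + 1))
    {β : E} (hβ : β ≠ 0) :
    Fintype.card F ^ 2 - Fintype.card F ≤
      hammingNorm (traceEncoder F θ (Fintype.card F ^ 2 + 1) β) := by
  have hzeros := (card_filter_traceEncoder_eq_zero_le hθ β).trans
    (ncard_pow_eq_one_trace_mul_eq_zero_le hdim hβ)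
  have hsplit := Finset.card_filter_add_card_filter_not (s := Finset.univ)
    fun j => traceEncoder F θ (Fintype.card F ^ 2 + 1) β j = 0
  rw [Finset.card_univ, Fintype.card_fin] at hsplit
  simp only [hammingNorm, ne_eq]
  omega

theorem isPrimitiveRoot_pow_sq_sub_one [Finite E] {q : ℕ} (hE : Nat.card E = q ^ 4)
    {α : Eˣ} (hα : ∀ x : Eˣ, x ∈ Subgroup.zpowers α) :
    IsPrimitiveRoot ((α : E) ^ (q ^ 2 - 1)) (q ^ 2 + 1) := by
  have horder : orderOf (α : E) = (q ^ 2 - 1) * (q ^ 2 + 1) := by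
    rw [orderOf_units, orderOf_eq_card_of_forall_mem_zpowers hα, Nat.card_units, hE, mul_comm,
      ← Nat.sq_sub_sq, ← pow_mul, one_pow]
  exact (IsPrimitiveRoot.orderOf (α : E)).pow
    (by rw [orderOf_units]; exact orderOf_pos α) horder

end Code

theorem irreducible_cyclic_code_is_ovoid_code_general {F E : Type*} [Field F] [Fintype F]
    [DecidableEq F] [CharP F 2] [Field E] [Fintype E] [Algebra F E] {q : ℕ}
    (hF : Fintype.card F = q) (hE : Fintype.card E = q ^ 4) {θ : E}
    (hθ : IsPrimitiveRoot θ (q ^ 2 + 1)) :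
    let cw : E → (Fin (q ^ 2 + 1) → F) := traceEncoder F θ (q ^ 2 + 1)
    Function.Injective cw ∧
    (Set.range cw).ncard = q ^ 4 ∧
    Module.finrank F (Submodule.span F (Set.range cw)) = 4 ∧
    (∀ β : E, β ≠ 0 → q ^ 2 - q ≤ hammingNorm (cw β)) ∧
    (∃ β : E, β ≠ 0 ∧ hammingNorm (cw β) = q ^ 2 - q) := by
  subst hF
  intro cw
  have hq : 1 < Fintype.card F := Fintype.one_lt_card
  have : CharP E 2 := charP_of_injective_algebraMap (algebraMap F E).injective 2
  have hdim : Module.finrank F E = 4 :=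
    Nat.pow_right_injective hq (Module.card_eq_pow_finrank.symm.trans hE)
  have hweight (β : E) (hβ : β ≠ 0) := sq_sub_le_hammingNorm_traceEncoder hdim hθ hβ
  have hinj : Function.Injective cw := by
    refine (injective_iff_map_eq_zero (traceEncoder F θ _)).2 fun β hβ => ?_
    by_contra hβ₀
    have hpos : 0 < Fintype.card F ^ 2 - Fintype.card F :=
      Nat.sub_pos_of_lt (lt_self_pow₀ hq one_lt_two)
    simpa [hβ] using hpos.trans_le (hweight β hβ₀)
  refine ⟨hinj, ?_, ?_, hweight, ?_⟩
  · rw [Set.ncard_range_of_injective hinj, Nat.card_eq_fintype_card, hE]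
  · rw [← LinearMap.coe_range, Submodule.span_eq, LinearMap.finrank_range_of_inj hinj, hdim]
  · obtain ⟨β, hβ, hle⟩ := exists_ne_zero_hammingNorm_le_sq_sub hq rfl hE (Fintype.card_fin _)
      (traceEncoder F θ (Fintype.card F ^ 2 + 1)).toAddMonoidHom
    exact ⟨β, hβ, hle.antisymm (hweight β hβ)⟩

/-- For q = 2^s (s ≥ 2), r = q⁴, N = q²−1, n = q²+1, the irreducible
cyclic code C(r,N) = { c(β) = (Tr(βθ^j))_{0 ≤ j ≤ n−1} : β ∈ GF(r) } over GF(q), where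
θ = α^N for a primitive element α of GF(r), is a [q²+1, 4, q²−q] linear code: the map
β ↦ c(β) is injective (so there are q⁴ codewords, and the code has dimension 4), and
the minimum Hamming weight of a nonzero codeword is q²−q. -/
theorem irreducible_cyclic_code_is_ovoid_code {q s : ℕ} (hs : 2 ≤ s) (hq : q = 2 ^ s)
    (F E : Type) [Field F] [Fintype F] [DecidableEq F] [Field E] [Fintype E] [Algebra F E]
    (hF : Fintype.card F = q) (hE : Fintype.card E = q ^ 4)
    (α : Eˣ) (hα : ∀ x : Eˣ, x ∈ Subgroup.zpowers α) :
    let cw : E → (Fin (q ^ 2 + 1) → F) := fun β j =>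
      Algebra.trace F E (β * (((α : E) ^ (q ^ 2 - 1)) ^ (j : ℕ)))
    Function.Injective cw ∧
    (Set.range cw).ncard = q ^ 4 ∧
    Module.finrank F (Submodule.span F (Set.range cw)) = 4 ∧
    (∀ β : E, β ≠ 0 → q ^ 2 - q ≤ hammingNorm (cw β)) ∧
    (∃ β : E, β ≠ 0 ∧ hammingNorm (cw β) = q ^ 2 - q) := by
  have : CharP F 2 := charP_of_card_eq_prime_pow (hF.trans hq)
  exact irreducible_cyclic_code_is_ovoid_code_general hF hE
    (isPrimitiveRoot_pow_sq_sub_one (Nat.card_eq_fintype_card.trans hE) hα)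
end

section
/- Let q ≥ 4 be a prime power and let C be a linear code over GF(q) with parameters [q²+1, 4, q²−q]. Let D be the collection of distinct supports of codewords of the dual code C⊥ of Hamming weight 4. Then for every 3-element subset T of the coordinate set, the number of members of D containing T equals q−2; that is, (coordinate set, D) is a 3-(q²+1, 4, q−2) design. -/
/-- The dual code of a linear code `C ⊆ GF(q)ⁿ`:
all vectors `x` with `∑ i, x i * c i = 0` for every `c ∈ C`. -/
def dualCode {n : ℕ} {F : Type} [Field F] (C : Submodule F (Fin n → F)) :
    Submodule F (Fin n → F) where
  carrier := {x | ∀ c ∈ C, ∑ i, x i * c i = 0}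
  zero_mem' := by intro c hc; simp
  add_mem' := by
    intro a b ha hb c hc
    simp only [Set.mem_setOf_eq] at ha hb ⊢
    simp [Pi.add_apply, add_mul, Finset.sum_add_distrib, ha c hc, hb c hc]
  smul_mem' := by
    intro r x hx c hc
    simp only [Set.mem_setOf_eq] at hx ⊢
    simp [Pi.smul_apply, smul_eq_mul, mul_assoc, ← Finset.mul_sum, hx c hc]

/-!
Double counting (the Plotkin bound) controls the subcodes of `C`: the `q² - 1` nonzero words of a
two-dimensional subcode vanishing on `m` coordinates have total weight at most
`(q² + 1 - m)(q² - q)`, while each has weight at least `q² - q`. Hence `m ≤ 2`, and for `m = 2`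
every nonzero word has exactly `q + 1` zeros. So the words of `C` vanishing on a three-element set
`T` form a line, spanned by some `c` with `q + 1` zeros.

On the dual side, `dim {x ∈ C⊥ | supp x ⊆ U} + dim C = dim {c ∈ C | c = 0 on U} + |U|`. This gives
first that `C⊥` has no nonzero word of weight at most three, and then that a four-element set `U`
is the support of a dual word iff some nonzero word of `C` vanishes on `U`. The blocks containing
`T` are therefore the sets `T ∪ {j}` with `j` one of the `q + 1 - 3` zeros of `c` outside `T`.
-/

open Finset Module

theorem ncard_support_eq_hammingNorm {ι M : Type*} [Fintype ι] [Zero M] [DecidableEq M]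
    (x : ι → M) : (Function.support x).ncard = hammingNorm x := by
  simp [Set.ncard_eq_toFinset_card', hammingNorm, Function.support]

section VanishingOn

variable {ι F : Type*} [Field F]

/-- The vectors whose coordinates in `S` are all zero. The words of a code `C` supported outside `S`
(the code shortened at `S`, up to deletion of coordinates) form `C ⊓ vanishingOn F S`, and those
supported inside `S` form `C ⊓ vanishingOn F Sᶜ`. -/
def vanishingOn (F : Type*) [Field F] (S : Finset ι) : Submodule F (ι → F) :=
  Submodule.pi (S : Set ι) fun _ => ⊥

theorem mem_vanishingOn {S : Finset ι} {x : ι → F} :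
    x ∈ vanishingOn F S ↔ ∀ i ∈ S, x i = 0 := by
  simp [vanishingOn]

theorem vanishingOn_insert [DecidableEq ι] (i : ι) (S : Finset ι) :
    vanishingOn F (insert i S) = vanishingOn F S ⊓ vanishingOn F {i} := by
  ext x
  simp [mem_vanishingOn, and_comm]

theorem inf_vanishingOn_insert_ne_bot_iff [DecidableEq ι] {C : Submodule F (ι → F)} {S : Finset ι}
    {c : ι → F} (hS : finrank F ↥(C ⊓ vanishingOn F S) = 1) (hc : c ∈ C ⊓ vanishingOn F S)
    (hc0 : c ≠ 0) (j : ι) : C ⊓ vanishingOn F (insert j S) ≠ ⊥ ↔ c j = 0 := by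
  rw [vanishingOn_insert, ← inf_assoc, Submodule.ne_bot_iff]
  constructor
  · rintro ⟨x, ⟨hx, hxj⟩, hx0⟩
    obtain ⟨a, hax⟩ :=
      exists_smul_eq_of_finrank_eq_one hS (x := ⟨c, hc⟩) (by simpa using hc0) ⟨x, hx⟩
    obtain rfl : a • c = x := congrArg Subtype.val hax
    have ha : a ≠ 0 := by rintro rfl; simp at hx0
    simpa [mem_vanishingOn, ha] using hxj
  · exact fun hcj => ⟨c, ⟨hc, by simpa [mem_vanishingOn] using hcj⟩, hc0⟩

theorem finrank_vanishingOn_add_card [Fintype ι] (S : Finset ι) :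
    finrank F (vanishingOn F S) + #S = Fintype.card ι := by
  let restriction : (ι → F) →ₗ[F] (S → F) := LinearMap.funLeft F F (↑)
  have hsurj : Function.Surjective restriction :=
    LinearMap.funLeft_surjective_of_injective F F _ Subtype.val_injective
  have hker : LinearMap.ker restriction = vanishingOn F S := by
    ext x
    simp [restriction, mem_vanishingOn, funext_iff, LinearMap.funLeft_apply]
  have h := LinearMap.finrank_range_add_finrank_ker restriction
  rw [LinearMap.range_eq_top.2 hsurj, finrank_top, hker] at h
  simpa [add_comm] using h

theorem finrank_le_finrank_inf_vanishingOn_add_card [Finite ι] (C : Submodule F (ι → F))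
    (S : Finset ι) : finrank F C ≤ finrank F ↥(C ⊓ vanishingOn F S) + #S := by
  have := Fintype.ofFinite ι
  have hdim := Submodule.finrank_sup_add_finrank_inf_eq C (vanishingOn F S)
  have hsup : finrank F ↥(C ⊔ vanishingOn F S) ≤ Fintype.card ι := by
    simpa using Submodule.finrank_le (C ⊔ vanishingOn F S)
  have hS := finrank_vanishingOn_add_card (F := F) S
  lia

end VanishingOn

section DualCode

variable {n : ℕ} {F : Type} [Field F]

theorem dualCode_eq_comap_dualAnnihilator (C : Submodule F (Fin n → F)) :
    dualCode C = C.dualAnnihilator.comap (dotProductEquiv F (Fin n)).toLinearMap := by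
  ext x
  simp [dualCode, Submodule.mem_dualAnnihilator, dotProduct]

theorem finrank_add_finrank_dualCode (C : Submodule F (Fin n → F)) :
    finrank F C + finrank F (dualCode C) = n := by
  rw [dualCode_eq_comap_dualAnnihilator, Submodule.comap_equiv_eq_map_symm,
    LinearEquiv.finrank_map_eq, Subspace.finrank_add_finrank_dualAnnihilator_eq, finrank_fin_fun]

theorem dualCode_sup (C K : Submodule F (Fin n → F)) :
    dualCode (C ⊔ K) = dualCode C ⊓ dualCode K := by
  simp only [dualCode_eq_comap_dualAnnihilator, Submodule.dualAnnihilator_sup_eq,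
    Submodule.comap_inf]

theorem dualCode_vanishingOn (S : Finset (Fin n)) :
    dualCode (vanishingOn F S) = vanishingOn F Sᶜ := by
  ext x
  rw [mem_vanishingOn]
  constructor
  · intro hx i hi
    have hsingle : Pi.single i 1 ∈ vanishingOn F S :=
      mem_vanishingOn.2 fun j hj => Pi.single_eq_of_ne (by rintro rfl; simp_all) 1
    simpa [Pi.single_apply] using hx _ hsingle
  · refine fun hx c hc => sum_eq_zero fun i _ => ?_
    by_cases hi : i ∈ S
    · rw [mem_vanishingOn.1 hc i hi, mul_zero]
    · rw [hx i (mem_compl.2 hi), zero_mul]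

theorem finrank_dualCode_inf_vanishingOn_compl (C : Submodule F (Fin n → F)) (U : Finset (Fin n)) :
    finrank F ↥(dualCode C ⊓ vanishingOn F Uᶜ) + finrank F C =
      finrank F ↥(C ⊓ vanishingOn F U) + #U := by
  have hdual := finrank_add_finrank_dualCode (C ⊔ vanishingOn F U)
  rw [dualCode_sup, dualCode_vanishingOn] at hdual
  have hdim := Submodule.finrank_sup_add_finrank_inf_eq C (vanishingOn F U)
  have hU := finrank_vanishingOn_add_card (F := F) U
  rw [Fintype.card_fin] at hU
  lia

theorem exists_mem_dualCode_support_eq_iff {k : ℕ} {C : Submodule F (Fin n → F)}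
    (hdim : finrank F C = k + 1)
    (hline : ∀ T : Finset (Fin n), #T = k → finrank F ↥(C ⊓ vanishingOn F T) = 1)
    {U : Finset (Fin n)} (hU : #U = k + 1) :
    (∃ x ∈ dualCode C, Function.support x = U) ↔ C ⊓ vanishingOn F U ≠ ⊥ := by
  have hfinrank := finrank_dualCode_inf_vanishingOn_compl C U
  rw [hdim, hU, Nat.add_right_cancel_iff] at hfinrank
  rw [← Submodule.one_le_finrank_iff, ← hfinrank, Submodule.one_le_finrank_iff,
    Submodule.ne_bot_iff]
  constructor
  · rintro ⟨x, hx, hxU⟩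
    refine ⟨x, ⟨hx, mem_vanishingOn.2 fun i hi => ?_⟩, ?_⟩
    · simpa [← mem_coe, ← hxU] using hi
    · rw [← Function.support_nonempty_iff, hxU, coe_nonempty, ← card_pos]
      lia
  · rintro ⟨x, ⟨hx, hxU⟩, hx0⟩
    refine ⟨x, hx, ?_⟩
    have hsub : ∀ i, x i ≠ 0 → i ∈ U := fun i hi => by
      by_contra hiU
      exact hi (mem_vanishingOn.1 hxU i (mem_compl.2 hiU))
    refine Set.Subset.antisymm hsub fun u hu hxu => hx0 ?_
    have herase : #(U.erase u) = k := by rw [card_erase_of_mem hu, hU, Nat.add_sub_cancel]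
    have htrivial := finrank_dualCode_inf_vanishingOn_compl C (U.erase u)
    rw [hline _ herase, hdim, herase, add_comm 1 k, Nat.add_eq_right, Submodule.finrank_eq_zero]
      at htrivial
    refine (Submodule.eq_bot_iff _).1 htrivial x ⟨hx, mem_vanishingOn.2 fun i hi => ?_⟩
    by_contra hxi
    exact mem_compl.1 hi (mem_erase.2 ⟨by rintro rfl; exact hxi hxu, hsub i hxi⟩)

end DualCode

section Plotkin

theorem card_univ_erase_zero (F V : Type*) [Field F] [Fintype F] [AddCommGroup V] [Module F V]
    [Fintype V] [DecidableEq V] :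
    #(univ.erase (0 : V)) = Fintype.card F ^ finrank F V - 1 := by
  rw [card_erase_of_mem (mem_univ _), card_univ, Module.card_eq_pow_finrank (K := F)]

variable {ι F : Type*} [Field F] [Fintype F] [DecidableEq F]

theorem card_apply_ne_zero_le {V : Type*} [AddCommGroup V] [Module F V] [Fintype V]
    (f : V →ₗ[F] F) :
    #{v | f v ≠ 0} ≤
      Fintype.card F ^ finrank F V - Fintype.card F ^ (finrank F V - 1) := by
  have hker : #{v | f v = 0} = Fintype.card F ^ finrank F (LinearMap.ker f) := by
    rw [← Fintype.card_subtype, ← Nat.card_eq_fintype_card, ← Nat.card_eq_fintype_card (α := F),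
      ← Module.natCard_eq_pow_finrank (V := LinearMap.ker f)]
    rfl
  have hrank : finrank F V - 1 ≤ finrank F (LinearMap.ker f) := by
    have hrange : finrank F (LinearMap.range f) ≤ 1 := by
      simpa using Submodule.finrank_le (LinearMap.range f)
    have := LinearMap.finrank_range_add_finrank_ker f
    lia
  have hpow := Nat.pow_le_pow_right (Fintype.card_pos (α := F)) hrank
  have hsplit := card_filter_add_card_filter_not (s := (univ : Finset V)) fun v => f v = 0
  rw [card_univ, Module.card_eq_pow_finrank (K := F)] at hsplit
  lia

variable [Fintype ι] {K : Submodule F (ι → F)} {S : Finset ι} {d : ℕ}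

theorem sum_hammingNorm_le [Fintype K] (hKS : K ≤ vanishingOn F S) :
    ∑ c : K, hammingNorm (c : ι → F) ≤ (Fintype.card ι - #S) *
      (Fintype.card F ^ finrank F K - Fintype.card F ^ (finrank F K - 1)) := by
  classical
  have hvanish : ∀ i ∈ univ, i ∉ Sᶜ → #{c : K | (c : ι → F) i ≠ 0} = 0 := fun i _ hi => by
    simpa [filter_eq_empty_iff] using
      fun c hc => mem_vanishingOn.1 (hKS hc) i (by simpa using hi)
  calc ∑ c : K, hammingNorm (c : ι → F)
      = ∑ i, #{c : K | (c : ι → F) i ≠ 0} := by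
        simp only [hammingNorm, card_filter]
        exact sum_comm
    _ = ∑ i ∈ Sᶜ, #{c : K | (c : ι → F) i ≠ 0} := (sum_subset (subset_univ _) hvanish).symm
    _ ≤ #Sᶜ * (Fintype.card F ^ finrank F K - Fintype.card F ^ (finrank F K - 1)) :=
        sum_le_card_nsmul _ _ _ fun i _ =>
          card_apply_ne_zero_le ((LinearMap.proj i).comp K.subtype)
    _ = _ := by rw [card_compl]

theorem sum_erase_zero_hammingNorm_le [Fintype K] [DecidableEq K] (hKS : K ≤ vanishingOn F S) :
    ∑ c ∈ univ.erase (0 : K), hammingNorm (c : ι → F) ≤ (Fintype.card ι - #S) *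
      (Fintype.card F ^ finrank F K - Fintype.card F ^ (finrank F K - 1)) := by
  rw [sum_erase univ (by simp)]
  exact sum_hammingNorm_le hKS

theorem plotkin_bound_s16 (hKS : K ≤ vanishingOn F S) (hd : ∀ c ∈ K, c ≠ 0 → d ≤ hammingNorm c) :
    (Fintype.card F ^ finrank F K - 1) * d ≤ (Fintype.card ι - #S) *
      (Fintype.card F ^ finrank F K - Fintype.card F ^ (finrank F K - 1)) := by
  classical
  have := Fintype.ofFinite K
  rw [← card_univ_erase_zero F K]
  refine (card_nsmul_le_sum _ _ d fun c hc => ?_).trans (sum_erase_zero_hammingNorm_le hKS)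
  exact hd c c.2 (by simpa using hc)

theorem hammingNorm_eq_of_plotkin_bound_eq (hKS : K ≤ vanishingOn F S)
    (hd : ∀ c ∈ K, c ≠ 0 → d ≤ hammingNorm c)
    (heq : (Fintype.card F ^ finrank F K - 1) * d = (Fintype.card ι - #S) *
      (Fintype.card F ^ finrank F K - Fintype.card F ^ (finrank F K - 1)))
    {c : ι → F} (hc : c ∈ K) (hc0 : c ≠ 0) : hammingNorm c = d := by
  classical
  have := Fintype.ofFinite K
  have hle : ∀ x ∈ univ.erase (0 : K), d ≤ hammingNorm (x : ι → F) := fun x hx =>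
    hd x x.2 (by simpa using hx)
  have hsum : ∑ x ∈ univ.erase (0 : K), hammingNorm (x : ι → F) ≤
      ∑ _x ∈ univ.erase (0 : K), d := by
    rw [sum_const, smul_eq_mul, card_univ_erase_zero F, heq]
    exact sum_erase_zero_hammingNorm_le hKS
  have hall := (sum_eq_sum_iff_of_le hle).1 ((sum_le_sum hle).antisymm hsum)
  exact (hall ⟨c, hc⟩ (by simpa using hc0)).symm

theorem card_le_two_of_two_le_finrank {q : ℕ} (hF : Fintype.card F = q)
    (hlength : Fintype.card ι = q ^ 2 + 1) (hKS : K ≤ vanishingOn F S)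
    (hd : ∀ c ∈ K, c ≠ 0 → q ^ 2 - q ≤ hammingNorm c) (hrank : 2 ≤ finrank F K) : #S ≤ 2 := by
  have hplotkin := plotkin_bound_s16 hKS hd
  obtain ⟨k, hk⟩ := Nat.exists_eq_add_of_le' hrank
  have hfactor : q ^ (k + 2) - q ^ (k + 2 - 1) = q ^ k * (q ^ 2 - q) := by
    rw [Nat.mul_sub, ← pow_add, ← pow_succ]
    rfl
  rw [hF, hlength, hk, hfactor, ← mul_assoc] at hplotkin
  have hq : 1 < q := hF ▸ Fintype.one_lt_card
  have hcancel := Nat.le_of_mul_le_mul_right hplotkin (Nat.sub_pos_of_lt (by nlinarith))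
  by_contra! hS
  have hqk : 0 < q ^ k := by positivity
  have hlt : (q ^ 2 + 1 - #S) * q ^ k < q ^ (k + 2) - 1 :=
    calc (q ^ 2 + 1 - #S) * q ^ k ≤ (q ^ 2 - 2) * q ^ k := Nat.mul_le_mul_right _ (by lia)
      _ = q ^ (k + 2) - 2 * q ^ k := by rw [Nat.sub_mul, ← pow_add, add_comm]
      _ < q ^ (k + 2) - 1 := by
        have : 2 * q ^ k ≤ q ^ (k + 2) := by rw [pow_add, mul_comm]; gcongr; nlinarith
        lia
  exact absurd hcancel hlt.not_ge

end Plotkin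

/-- `C` is a linear code over a field with `q` elements with parameters `[q² + 1, 4, ≥ q² - q]`;
such codes correspond to ovoids of the projective space `PG(3, q)`. -/
structure IsOvoidCode {ι F : Type*} [Field F] [Fintype F] [DecidableEq F] [Fintype ι]
    (q : ℕ) (C : Submodule F (ι → F)) : Prop where
  card_field : Fintype.card F = q
  length_eq : Fintype.card ι = q ^ 2 + 1
  finrank_eq : finrank F C = 4
  le_hammingNorm : ∀ c ∈ C, c ≠ 0 → q ^ 2 - q ≤ hammingNorm c

namespace IsOvoidCode

section Hyperplanes

variable {ι F : Type*} [Field F] [Fintype F] [DecidableEq F] [Fintype ι] {q : ℕ}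
  {C : Submodule F (ι → F)} {S T : Finset ι}

theorem finrank_inf_vanishingOn_of_card_eq_three (hC : IsOvoidCode q C) (hT : #T = 3) :
    finrank F ↥(C ⊓ vanishingOn F T) = 1 := by
  have hlower := finrank_le_finrank_inf_vanishingOn_add_card C T
  have hupper : ¬ 2 ≤ finrank F ↥(C ⊓ vanishingOn F T) := fun hrank => by
    have := card_le_two_of_two_le_finrank hC.card_field hC.length_eq inf_le_right
      (fun c hc => hC.le_hammingNorm c hc.1) hrank
    lia
  rw [hC.finrank_eq] at hlower
  lia

theorem finrank_inf_vanishingOn_of_card_eq_two (hC : IsOvoidCode q C) (hS : #S = 2) :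
    finrank F ↥(C ⊓ vanishingOn F S) = 2 := by
  classical
  have hlower := finrank_le_finrank_inf_vanishingOn_add_card C S
  rw [hC.finrank_eq, hS] at hlower
  have hlength : #S < Fintype.card ι := by
    have : 1 < q := hC.card_field ▸ Fintype.one_lt_card
    rw [hS, hC.length_eq]
    nlinarith
  obtain ⟨t, ht⟩ := exists_mem_notMem_of_card_lt_card hlength
  have hline := hC.finrank_inf_vanishingOn_of_card_eq_three (T := insert t S)
    (by rw [card_insert_of_notMem ht.2, hS])
  have hupper := finrank_le_finrank_inf_vanishingOn_add_card (C ⊓ vanishingOn F S) {t}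
  rw [inf_assoc, ← vanishingOn_insert, hline, card_singleton] at hupper
  lia

theorem hammingNorm_eq_of_mem_inf_vanishingOn (hC : IsOvoidCode q C) (hS : #S = 2) {c : ι → F}
    (hc : c ∈ C ⊓ vanishingOn F S) (hc0 : c ≠ 0) : hammingNorm c = q ^ 2 - q := by
  refine hammingNorm_eq_of_plotkin_bound_eq inf_le_right (fun x hx => hC.le_hammingNorm x hx.1)
    ?_ hc hc0
  rw [hC.finrank_inf_vanishingOn_of_card_eq_two hS, hC.card_field, hC.length_eq, hS, pow_one]
  rfl

theorem card_zeros_of_mem_inf_vanishingOn (hC : IsOvoidCode q C) (hT : #T = 3) {c : ι → F}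
    (hc : c ∈ C ⊓ vanishingOn F T) (hc0 : c ≠ 0) : #{i | c i = 0} = q + 1 := by
  obtain ⟨S, hST, hS⟩ := exists_subset_card_eq (show 2 ≤ #T by lia)
  have hcS : c ∈ C ⊓ vanishingOn F S :=
    ⟨hc.1, mem_vanishingOn.2 fun i hi => mem_vanishingOn.1 hc.2 i (hST hi)⟩
  have hweight : #{i | c i ≠ 0} = q ^ 2 - q := hC.hammingNorm_eq_of_mem_inf_vanishingOn hS hcS hc0
  have hsplit := card_filter_add_card_filter_not (s := (univ : Finset ι)) fun i => c i = 0
  rw [hweight, card_univ, hC.length_eq] at hsplit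
  have : q ≤ q ^ 2 := Nat.le_self_pow two_ne_zero q
  lia

end Hyperplanes

section Blocks

variable {n q : ℕ} {F : Type} [Field F] [Fintype F] [DecidableEq F]
  {C : Submodule F (Fin n → F)} {T : Finset (Fin n)}

theorem exists_mem_dualCode_support_eq_insert_iff (hC : IsOvoidCode q C) (hT : #T = 3)
    {c : Fin n → F} (hc : c ∈ C ⊓ vanishingOn F T) (hc0 : c ≠ 0) {j : Fin n} (hj : j ∉ T) :
    (∃ x ∈ dualCode C, Function.support x = insert j (T : Set (Fin n))) ↔ c j = 0 := by
  rw [← inf_vanishingOn_insert_ne_bot_iff (hC.finrank_inf_vanishingOn_of_card_eq_three hT) hc hc0,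
    ← exists_mem_dualCode_support_eq_iff hC.finrank_eq
      (fun _ => hC.finrank_inf_vanishingOn_of_card_eq_three)
      (by rw [card_insert_of_notMem hj, hT]), coe_insert]

theorem setOf_dualCode_supports_superset_eq_image (hC : IsOvoidCode q C) (hT : #T = 3)
    {c : Fin n → F} (hc : c ∈ C ⊓ vanishingOn F T) (hc0 : c ≠ 0) :
    {b : Set (Fin n) | (∃ x ∈ dualCode C, Function.support x = b) ∧ b.ncard = 4 ∧ ↑T ⊆ b} =
      (insert · (T : Set (Fin n))) '' ({j | c j = 0} \ T) := by
  ext b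
  have hinsert : (∃ j ∉ T, insert j ↑T = b) ↔ b.ncard = 4 ∧ ↑T ⊆ b := by
    have h := Set.exists_eq_insert_iff_ncard (s := (T : Set (Fin n))) (t := b)
    rwa [Set.ncard_coe_finset, hT, and_comm, eq_comm] at h
  rw [Set.mem_ofPred_eq, ← hinsert]
  constructor
  · rintro ⟨hx, j, hj, rfl⟩
    exact ⟨j, ⟨(hC.exists_mem_dualCode_support_eq_insert_iff hT hc hc0 hj).1 hx, hj⟩, rfl⟩
  · rintro ⟨j, ⟨hcj, hj⟩, rfl⟩
    exact ⟨(hC.exists_mem_dualCode_support_eq_insert_iff hT hc hc0 hj).2 hcj, j, hj, rfl⟩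

theorem ncard_dualCode_supports_superset (hC : IsOvoidCode q C) (hT : #T = 3) :
    {b : Set (Fin n) | (∃ x ∈ dualCode C, Function.support x = b) ∧
      b.ncard = 4 ∧ ↑T ⊆ b}.ncard = q - 2 := by
  obtain ⟨c, hc, hc0⟩ : ∃ c ∈ C ⊓ vanishingOn F T, c ≠ 0 := by
    rw [← Submodule.ne_bot_iff, ← Submodule.one_le_finrank_iff,
      hC.finrank_inf_vanishingOn_of_card_eq_three hT]
  have hinj : Set.InjOn (insert · (T : Set (Fin n))) ({j | c j = 0} \ T) :=
    fun i hi j _ hij => (Set.insert_inj hi.2).1 hij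
  have hTzeros : (T : Set (Fin n)) ⊆ {j | c j = 0} := mem_vanishingOn.1 hc.2
  have hzeros : {j | c j = 0}.ncard = q + 1 := by
    rw [Set.ncard_eq_toFinset_card', Set.toFinset_ofPred,
      hC.card_zeros_of_mem_inf_vanishingOn hT hc hc0]
  rw [hC.setOf_dualCode_supports_superset_eq_image hT hc hc0, hinj.ncard_image,
    Set.ncard_sdiff hTzeros, hzeros, Set.ncard_coe_finset, hT]
  lia

end Blocks

end IsOvoidCode

theorem supports_of_weight_four_dual_codewords_form_design_general {q : ℕ}
    (F : Type) [Field F] [Fintype F] [DecidableEq F]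
    (hF : Fintype.card F = q)
    (C : Submodule F (Fin (q ^ 2 + 1) → F))
    (hdim : Module.finrank F C = 4)
    (hlb : ∀ c ∈ C, c ≠ 0 → q ^ 2 - q ≤ hammingNorm c) :
    let D : Set (Set (Fin (q ^ 2 + 1))) :=
      {b | ∃ x ∈ dualCode C, hammingNorm x = 4 ∧ b = {i | x i ≠ 0}}
    (∀ b ∈ D, b.ncard = 4) ∧
    (∀ T : Finset (Fin (q ^ 2 + 1)), T.card = 3 →
      {b ∈ D | ↑T ⊆ b}.ncard = q - 2) := by
  have hC : IsOvoidCode q C := ⟨hF, Fintype.card_fin _, hdim, hlb⟩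
  intro D
  have hD : ∀ b, b ∈ D ↔ (∃ x ∈ dualCode C, Function.support x = b) ∧ b.ncard = 4 := by
    intro b
    constructor
    · rintro ⟨x, hx, hx4, rfl⟩
      exact ⟨⟨x, hx, rfl⟩, (ncard_support_eq_hammingNorm x).trans hx4⟩
    · rintro ⟨⟨x, hx, rfl⟩, hx4⟩
      exact ⟨x, hx, (ncard_support_eq_hammingNorm x).symm.trans hx4, rfl⟩
  refine ⟨fun b hb => ((hD b).1 hb).2, fun T hT => ?_⟩
  simpa only [hD, and_assoc] using hC.ncard_dualCode_supports_superset hT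

/-- For a [q²+1, 4, q²−q] code C over GF(q), q ≥ 4 a prime power, the
distinct supports of the weight-4 codewords of the dual code C⊥ form a
3-(q²+1, 4, q−2) design. -/
theorem supports_of_weight_four_dual_codewords_form_design {q : ℕ}
    (F : Type) [Field F] [Fintype F] [DecidableEq F]
    (hF : Fintype.card F = q) (hq : 4 ≤ q)
    (C : Submodule F (Fin (q ^ 2 + 1) → F))
    (hdim : Module.finrank F C = 4)
    (hlb : ∀ c ∈ C, c ≠ 0 → q ^ 2 - q ≤ hammingNorm c)
    (hex : ∃ c ∈ C, c ≠ 0 ∧ hammingNorm c = q ^ 2 - q) :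
    let D : Set (Set (Fin (q ^ 2 + 1))) :=
      {b | ∃ x ∈ dualCode C, hammingNorm x = 4 ∧ b = {i | x i ≠ 0}}
    (∀ b ∈ D, b.ncard = 4) ∧
    (∀ T : Finset (Fin (q ^ 2 + 1)), T.card = 3 →
      {b ∈ D | ↑T ⊆ b}.ncard = q - 2) := by
  exact supports_of_weight_four_dual_codewords_form_design_general F hF C hdim hlb
end
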